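/- Gap labels of the Thue–Morse subshift: for every T-ergodic Borel probability measure μ on the Thue–Morse subshift Ω, the set {∫_Ω g dμ : g : Ω → ℤ continuous} ⊆ ℝ equals {k/(3·2^n) : k ∈ ℤ, n ∈ ℕ ∪ {0}}. -/

import Mathlib

open MeasureTheory

/-!
The measure enters through the functional `φ(g) = ∫ g dμ` on `C(Ω, ℤ)`, which is an `InvState`:
additive, positive, normalized and shift-invariant.

Recognizability of the substitution `σ` gives a continuous desubstitution map `ρ = tmDesub` and a
clopen splitting of `Ω` into two halves exchanged by the shift `T`: the points `σ(ρω)` and the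
points `T(σ(ρω))`. Dualizing, `φ'(g) = φ(g ∘ ρ)` is again an invariant state (`InvState.renorm`),
and `φ(g) = φ'(g ∘ σ + g ∘ T ∘ σ) / 2` (`InvState.tower`). All results are proved for all invariant
states at once, so this renormalization can be iterated.

* The relation determines the frequency of each two-letter word: that of `00` satisfies
  `x = 1/4 - x'/2`, a contraction with fixed point `1/6` (`InvState.freq`); the words `00, 11` have
  frequency `1/6` and the words `01, 10` have frequency `1/3`.
* A continuous `g : Ω → ℤ` depends on finitely many coordinates, by compactness, and after shifting
  on the coordinates `0, …, m`. Passing from `g` to `g ∘ σ + g ∘ T ∘ σ` shrinks `m` to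
  `⌊(m+1)/2⌋`, hence eventually to `1`, where the value is an integer combination of frequencies of
  two-letter words. So `φ(g) ∈ ℤ[1/2]/3` (`InvState.value`).
* Conversely `φ(1_{σ(Ω)} · g ∘ ρ) = φ'(g) / 2`, and `1/3` is the frequency of `01`, so `1/(3·2^n)`
  is attained for all `n` (`InvState.exists_unit`).
-/

/-- The Thue–Morse substitution on the alphabet `{0,1}`: `0 ↦ 01`, `1 ↦ 10`. -/
def tmSub : Fin 2 → List (Fin 2) := fun a => if a = 0 then [0, 1] else [1, 0]

/-- The words `u_n = S^n(0)` for the Thue–Morse substitution. -/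
def tmWord : ℕ → List (Fin 2)
  | 0 => [0]
  | n + 1 => (tmWord n).flatMap tmSub

/-- The Thue–Morse subshift: all two-sided sequences each of whose finite subwords is a
subword of some `u_n`. -/
def tmSubshift : Set (ℤ → Fin 2) :=
  {ω | ∀ (a : ℤ) (k : ℕ), ∃ n : ℕ,
    (List.ofFn fun i : Fin k => ω (a + (i : ℕ))) <:+: tmWord n}

/-! ### The one-sided Thue–Morse sequence -/

/-- The one-sided Thue–Morse sequence, `t(i)` being the binary digit sum of `i` mod 2. -/
def tmSeq : ℕ → Fin 2
  | 0 => 0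
  | n + 1 => if (n + 1) % 2 = 0 then tmSeq ((n + 1) / 2) else 1 + tmSeq ((n + 1) / 2)
decreasing_by all_goals omega

theorem tmSeq_even (n : ℕ) : tmSeq (2 * n) = tmSeq n := by
  rcases n with _ | n
  · rfl
  · rw [show 2 * (n + 1) = (2 * n + 1) + 1 by ring, tmSeq, if_pos (by omega)]
    congr 1; omega

theorem tmSeq_odd (n : ℕ) : tmSeq (2 * n + 1) = 1 + tmSeq n := by
  rw [tmSeq, if_neg (by omega)]
  congr 2; omega

theorem tmWord_eq (n : ℕ) : tmWord n = (List.range (2 ^ n)).map tmSeq := by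
  have key : ∀ m : ℕ, ((List.range m).map tmSeq).flatMap tmSub
      = (List.range (2 * m)).map tmSeq := by
    intro m
    induction m with
    | zero => rfl
    | succ m ih =>
      rw [List.range_succ, List.map_append, List.flatMap_append, ih,
        show 2 * (m + 1) = 2 * m + 1 + 1 by ring, List.range_succ, List.range_succ]
      simp only [List.map_append, List.append_assoc, List.map_cons, List.map_nil,
        tmSeq_even, tmSeq_odd, List.flatMap_cons, List.flatMap_nil]
      congr 1
      generalize tmSeq m = x
      revert x; decide
  induction n with
  | zero => simp [tmWord, tmSeq]
  | succ n ih => rw [tmWord, ih, key, pow_succ, mul_comm]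

theorem infix_tmWord_iff {k : ℕ} (f : ℕ → Fin 2) :
    (∃ n, (List.ofFn fun i : Fin k => f i) <:+: tmWord n) ↔
      ∃ p : ℕ, ∀ i < k, f i = tmSeq (p + i) := by
  constructor
  · rintro ⟨n, s, r, h⟩
    refine ⟨s.length, fun i hi => ?_⟩
    have h2 : (s ++ (List.ofFn fun i : Fin k => f i) ++ r)[s.length + i]?
        = (tmWord n)[s.length + i]? := by rw [h]
    rw [List.append_assoc, List.getElem?_append_right (by omega),
      List.getElem?_append_left (by simpa using hi), Nat.add_sub_cancel_left, tmWord_eq] at h2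
    have hlen : s.length + i < 2 ^ n := by
      have := congrArg List.length h
      rw [tmWord_eq] at this
      simp at this
      omega
    simpa [hi, hlen] using h2
  · rintro ⟨p, h⟩
    refine ⟨p + k, (List.range p).map tmSeq,
      (List.range (2 ^ (p + k) - (p + k))).map (fun i => tmSeq (p + k + i)), ?_⟩
    have hlt : p + k < 2 ^ (p + k) := Nat.lt_two_pow_self
    rw [tmWord_eq]
    apply List.ext_getElem?
    intro i
    have e1 : (List.ofFn fun i : Fin k => f i) = (List.range k).map (fun i => tmSeq (p + i)) := by
      apply List.ext_getElem
      · simp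
      · intro i h1 h2
        simp at h1
        simpa using h i h1
    rw [e1]
    obtain ⟨q, hq⟩ := Nat.exists_eq_add_of_lt hlt
    rw [hq, show p + k + q + 1 - (p + k) = q + 1 by omega, add_assoc (p + k) q 1,
      List.range_add (n := p + k) (m := q + 1), List.range_add (n := p) (m := k)]
    simp only [List.map_append, List.map_map, Function.comp_def]

/-- A sequence lies in the subshift iff each of its finite windows occurs in the one-sided
Thue–Morse sequence. -/
theorem mem_tmSubshift_iff (ω : ℤ → Fin 2) :
    ω ∈ tmSubshift ↔ ∀ (a : ℤ) (k : ℕ), ∃ p : ℕ, ∀ i < k, ω (a + (i : ℕ)) = tmSeq (p + i) := by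
  unfold tmSubshift
  simp only [Set.mem_ofPred_eq]
  exact forall_congr' fun a => forall_congr' fun k =>
    infix_tmWord_iff (k := k) (fun i => ω (a + (i : ℕ)))

theorem fin2_cases (a : Fin 2) : a = 0 ∨ a = 1 := by
  revert a; decide

theorem fin2_eq_of_ne {a b c : Fin 2} (h : a ≠ b) (h' : b ≠ c) : a = c := by
  revert a b c; decide

theorem fin2_one_add_of_ne {a b : Fin 2} (h : a ≠ b) : 1 + a = b := by
  revert a b; decide

theorem fin2_ne_one_add (a : Fin 2) : a ≠ 1 + a := by
  revert a; decide

/-- The Thue–Morse sequence is cube-free on single letters: any three consecutive positions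
contain an aligned pair `2m, 2m+1`. -/
theorem tmSeq_no_cube (q : ℕ) (h1 : tmSeq q = tmSeq (q + 1)) (h2 : tmSeq (q + 1) = tmSeq (q + 2)) :
    False := by
  obtain ⟨m, rfl | rfl⟩ := Nat.even_or_odd' q
  · rw [tmSeq_even, tmSeq_odd] at h1
    exact fin2_ne_one_add _ h1
  · rw [show 2 * m + 1 + 1 = 2 * (m + 1) by ring, show 2 * m + 1 + 2 = 2 * (m + 1) + 1 by ring,
      tmSeq_even, tmSeq_odd] at h2
    exact fin2_ne_one_add _ h2

/-- No factor of length 5 of the Thue–Morse sequence alternates: desubstituting such a factor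
would produce three equal consecutive letters. -/
theorem tmSeq_no_alt (p : ℕ) (h : ∀ i < 4, tmSeq (p + i) ≠ tmSeq (p + i + 1)) : False := by
  have h0 := h 0 (by omega)
  have h1 := h 1 (by omega)
  have h2 := h 2 (by omega)
  have h3 := h 3 (by omega)
  have e1 := fin2_eq_of_ne h0 h1
  have e2 := fin2_eq_of_ne h2 h3
  obtain ⟨m, rfl | rfl⟩ := Nat.even_or_odd' p
  · rw [show 2 * m + 0 = 2 * m by ring, show 2 * m + 1 + 1 = 2 * (m + 1) by ring,
      tmSeq_even, tmSeq_even] at e1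
    rw [show 2 * m + 2 = 2 * (m + 1) by ring, show 2 * m + 3 + 1 = 2 * (m + 2) by ring,
      tmSeq_even, tmSeq_even] at e2
    exact tmSeq_no_cube m e1 e2
  · rw [show 2 * m + 1 + 0 = 2 * m + 1 by ring, show 2 * m + 1 + 1 + 1 = 2 * (m + 1) + 1 by ring,
      tmSeq_odd, tmSeq_odd] at e1
    rw [show 2 * m + 1 + 2 = 2 * (m + 1) + 1 by ring,
      show 2 * m + 1 + 3 + 1 = 2 * (m + 2) + 1 by ring, tmSeq_odd, tmSeq_odd] at e2
    exact tmSeq_no_cube m (add_left_cancel e1) (add_left_cancel e2)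

/-! ### Desubstitution in the two-sided subshift -/

/-- The sequence is cut into blocks `01`, `10` at the even positions. -/
def CutEven (ω : ℤ → Fin 2) : Prop := ∀ n : ℤ, ω (2 * n) ≠ ω (2 * n + 1)

/-- The sequence is cut into blocks `01`, `10` at the odd positions. -/
def CutOdd (ω : ℤ → Fin 2) : Prop := ∀ n : ℤ, ω (2 * n - 1) ≠ ω (2 * n)

theorem shift_mem {ω : ℤ → Fin 2} (h : ω ∈ tmSubshift) (c : ℤ) :
    (fun n => ω (n + c)) ∈ tmSubshift := by
  rw [mem_tmSubshift_iff] at h ⊢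
  intro a k
  obtain ⟨p, hp⟩ := h (a + c) k
  refine ⟨p, fun i hi => ?_⟩
  rw [← hp i hi]; congr 1; ring

theorem cut_or {ω : ℤ → Fin 2} (h : ω ∈ tmSubshift) : CutEven ω ∨ CutOdd ω := by
  by_contra hc
  simp only [CutEven, CutOdd, not_or, not_forall, not_not] at hc
  obtain ⟨⟨m, hm⟩, ⟨n, hn⟩⟩ := hc
  rw [mem_tmSubshift_iff] at h
  set a : ℤ := min (2 * m) (2 * n - 1) with ha
  obtain ⟨x, hx⟩ : ∃ x : ℕ, 2 * m = a + x := ⟨(2 * m - a).toNat, by omega⟩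
  obtain ⟨y, hy⟩ : ∃ y : ℕ, 2 * n - 1 = a + y := ⟨(2 * n - 1 - a).toNat, by omega⟩
  obtain ⟨p, hp⟩ := h a (x + y + 2)
  have cx : tmSeq (p + x) = tmSeq (p + (x + 1)) := by
    rw [← hp x (by omega), ← hp (x + 1) (by omega), ← hx]
    rw [hm]; congr 1; push_cast; omega
  have cy : tmSeq (p + y) = tmSeq (p + (y + 1)) := by
    rw [← hp y (by omega), ← hp (y + 1) (by omega), ← hy]
    rw [hn]; congr 1; push_cast; omega
  -- `x` and `y` have different parities, so one of the two repetitions is inside a block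
  have par : (p + x) % 2 = 0 ∨ (p + y) % 2 = 0 := by omega
  rcases par with par | par
  · obtain ⟨q, hq⟩ : ∃ q, p + x = 2 * q := ⟨(p + x) / 2, by omega⟩
    rw [← add_assoc, hq, tmSeq_even, tmSeq_odd] at cx
    exact fin2_ne_one_add _ cx
  · obtain ⟨q, hq⟩ : ∃ q, p + y = 2 * q := ⟨(p + y) / 2, by omega⟩
    rw [← add_assoc, hq, tmSeq_even, tmSeq_odd] at cy
    exact fin2_ne_one_add _ cy

theorem not_cut_both {ω : ℤ → Fin 2} (h : ω ∈ tmSubshift) (he : CutEven ω) (ho : CutOdd ω) :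
    False := by
  rw [mem_tmSubshift_iff] at h
  obtain ⟨p, hp⟩ := h 0 5
  refine tmSeq_no_alt p fun i hi => ?_
  rw [add_assoc, ← hp i (by omega), ← hp (i + 1) (by omega)]
  obtain ⟨m, rfl | rfl⟩ := Nat.even_or_odd' i
  · convert he m using 2 <;> push_cast <;> ring
  · convert ho (m + 1) using 2 <;> push_cast <;> ring

/-- Recognizability: a point cut at the even positions occurs in the Thue–Morse sequence only at
even offsets, once the window is long enough, so that desubstituting stays in the subshift. -/
theorem halve_mem {ω : ℤ → Fin 2} (h : ω ∈ tmSubshift) (he : CutEven ω) :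
    (fun n => ω (2 * n)) ∈ tmSubshift := by
  rw [mem_tmSubshift_iff] at h ⊢
  intro a k
  obtain ⟨p, hp⟩ := h (2 * a) (2 * k + 6)
  obtain ⟨m, rfl | rfl⟩ := Nat.even_or_odd' p
  · refine ⟨m, fun i hi => ?_⟩
    have := hp (2 * i) (by omega)
    rw [← mul_add, tmSeq_even] at this
    rw [← this]; congr 1; push_cast; ring
  · exfalso
    refine tmSeq_no_alt (2 * m + 1) fun i hi => ?_
    obtain ⟨j, rfl | rfl⟩ := Nat.even_or_odd' i
    · rw [add_assoc (2 * m + 1) (2 * j) 1, ← hp (2 * j) (by omega), ← hp (2 * j + 1) (by omega)]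
      convert he (a + j) using 2 <;> push_cast <;> ring
    · rw [show 2 * m + 1 + (2 * j + 1) = 2 * (m + j + 1) by ring, tmSeq_even, tmSeq_odd]
      exact fin2_ne_one_add _

/-- The Thue–Morse substitution on two-sided sequences. -/
def substZ (ω : ℤ → Fin 2) (n : ℤ) : Fin 2 := if n % 2 = 0 then ω (n / 2) else 1 + ω (n / 2)

theorem substZ_mem {ω : ℤ → Fin 2} (h : ω ∈ tmSubshift) : substZ ω ∈ tmSubshift := by
  rw [mem_tmSubshift_iff] at h ⊢
  intro a k
  obtain ⟨p, hp⟩ := h (a / 2) (k + 1)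
  refine ⟨2 * p + (a % 2).toNat, fun i hi => ?_⟩
  obtain ⟨j, hj⟩ : ∃ j : ℕ, (a + i) / 2 = a / 2 + j := ⟨((a + i) / 2 - a / 2).toNat, by omega⟩
  unfold substZ
  rw [hj, hp j (by omega)]
  split_ifs with h0
  · rw [← tmSeq_even]; congr 1; omega
  · rw [← tmSeq_odd]; congr 1; omega

/-! ### The continuous maps on the subshift -/

theorem continuous_coord (n : ℤ) : Continuous fun ω : ↥tmSubshift => ω.1 n :=
  (continuous_apply n).comp continuous_subtype_val

theorem continuous_coord_pair (m n : ℤ) : Continuous fun ω : ↥tmSubshift => (ω.1 m, ω.1 n) :=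
  (continuous_coord m).prodMk (continuous_coord n)

/-- The shift of the Thue–Morse subshift. -/
def tmShift : C(↥tmSubshift, ↥tmSubshift) where
  toFun ω := ⟨fun n => ω.1 (n + 1), shift_mem ω.2 1⟩
  continuous_toFun := Continuous.subtype_mk (continuous_pi fun n => continuous_coord (n + 1)) _

/-- The substitution as a self-map of the Thue–Morse subshift. -/
def tmSubst : C(↥tmSubshift, ↥tmSubshift) where
  toFun ω := ⟨substZ ω.1, substZ_mem ω.2⟩
  continuous_toFun := by
    refine Continuous.subtype_mk (continuous_pi fun n => ?_) _
    unfold substZ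
    split_ifs
    · exact continuous_coord _
    · exact (continuous_of_discreteTopology (f := fun x : Fin 2 => 1 + x)).comp
        (continuous_coord _)

theorem tmShift_val (ω : ↥tmSubshift) (n : ℤ) : (tmShift ω).1 n = ω.1 (n + 1) := rfl

theorem tmSubst_val (ω : ↥tmSubshift) (n : ℤ) : (tmSubst ω).1 n = substZ ω.1 n := rfl

theorem not_cutEven_iff (ω : ↥tmSubshift) : ¬ CutEven ω.1 ↔ CutOdd ω.1 :=
  ⟨fun h => (cut_or ω.2).resolve_left h, fun h h' => not_cut_both ω.2 h' h⟩

theorem cutOdd_shift (ω : ↥tmSubshift) : CutOdd (tmShift ω).1 ↔ CutEven ω.1 := by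
  simp only [CutOdd, CutEven, tmShift_val, sub_add_cancel]

theorem cutEven_shift (ω : ↥tmSubshift) : CutEven (tmShift ω).1 ↔ ¬ CutEven ω.1 := by
  rw [← cutOdd_shift ω, ← not_cutEven_iff, not_not]

theorem isClopen_cutEven : IsClopen {ω : ↥tmSubshift | CutEven ω.1} := by
  have aux : ∀ i j : ℤ, IsClosed {ω : ↥tmSubshift | ω.1 i ≠ ω.1 j} := by
    intro i j
    have hc := continuous_coord_pair i j
    exact (isClosed_discrete {q : Fin 2 × Fin 2 | q.1 ≠ q.2}).preimage hc
  constructor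
  · simp only [CutEven, Set.ofPred_forall]
    exact isClosed_iInter fun n => aux _ _
  · rw [← isClosed_compl_iff]
    have : {ω : ↥tmSubshift | CutEven ω.1}ᶜ = {ω : ↥tmSubshift | CutOdd ω.1} := by
      ext ω; exact not_cutEven_iff ω
    rw [this]
    simp only [CutOdd, Set.ofPred_forall]
    exact isClosed_iInter fun n => aux _ _

open Classical in
/-- Desubstitution: `ω` is the image under the substitution of `tmDesub ω`, shifted by one if `ω`
is cut at the odd positions. -/
noncomputable def tmDesub : C(↥tmSubshift, ↥tmSubshift) where
  toFun ω := ⟨fun n => if CutEven ω.1 then ω.1 (2 * n) else ω.1 (2 * n - 1), by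
    by_cases h : CutEven ω.1
    · simpa only [h, if_true] using halve_mem ω.2 h
    · simp only [h, if_false]
      refine halve_mem (shift_mem ω.2 (-1)) fun n => ?_
      have := (not_cutEven_iff ω).1 h n
      change ω.1 (2 * n + -1) ≠ ω.1 (2 * n + 1 + -1)
      rwa [add_neg_cancel_right, ← sub_eq_add_neg]⟩
  continuous_toFun := by
    refine Continuous.subtype_mk (continuous_pi fun n => ?_) _
    refine Continuous.if ?_ (continuous_coord _) (continuous_coord _)
    intro a ha
    rw [isClopen_cutEven.frontier_eq] at ha
    exact ha.elim

theorem tmDesub_even {ω : ↥tmSubshift} (h : CutEven ω.1) (n : ℤ) :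
    (tmDesub ω).1 n = ω.1 (2 * n) := if_pos h

theorem tmDesub_odd {ω : ↥tmSubshift} (h : ¬ CutEven ω.1) (n : ℤ) :
    (tmDesub ω).1 n = ω.1 (2 * n - 1) := if_neg h

theorem tmDesub_shift_even {ω : ↥tmSubshift} (h : CutEven ω.1) :
    tmDesub (tmShift ω) = tmDesub ω := by
  ext n : 2
  rw [tmDesub_even h, tmDesub_odd (by rw [cutEven_shift, not_not]; exact h), tmShift_val,
    sub_add_cancel]

theorem tmDesub_shift_odd {ω : ↥tmSubshift} (h : ¬ CutEven ω.1) :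
    tmDesub (tmShift ω) = tmShift (tmDesub ω) := by
  ext n : 2
  rw [tmShift_val, tmDesub_odd h, tmDesub_even ((cutEven_shift ω).2 h), tmShift_val]
  exact congrArg ω.1 (by ring)

theorem subst_desub_even {ω : ↥tmSubshift} (h : CutEven ω.1) : tmSubst (tmDesub ω) = ω := by
  ext n : 2
  rw [tmSubst_val]
  unfold substZ
  rw [tmDesub_even h]
  split_ifs with h0
  · exact congrArg ω.1 (by omega)
  · rw [fin2_one_add_of_ne (h (n / 2))]; exact congrArg ω.1 (by omega)

theorem subst_desub_odd {ω : ↥tmSubshift} (h : ¬ CutEven ω.1) :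
    tmShift (tmSubst (tmDesub ω)) = ω := by
  ext n : 2
  rw [tmShift_val, tmSubst_val]
  unfold substZ
  rw [tmDesub_odd h]
  split_ifs with h0
  · exact congrArg ω.1 (by omega)
  · rw [fin2_one_add_of_ne ((not_cutEven_iff ω).1 h ((n + 1) / 2))]; exact congrArg ω.1 (by omega)

/-! ### Invariant states and renormalization -/

/-- A shift-invariant state: an additive functional on integer-valued continuous functions that is
normalized, positive and invariant under the shift. Integration against an invariant probability
measure is the example of interest. -/
structure InvState (φ : C(↥tmSubshift, ℤ) →+ ℝ) : Prop where
  one : φ 1 = 1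
  nonneg : ∀ g, (∀ ω, 0 ≤ g ω) → 0 ≤ φ g
  shift : ∀ g, φ (g.comp tmShift) = φ g

open Classical in
/-- The indicator function of the clopen set of points cut at the even positions. -/
noncomputable def indEven : C(↥tmSubshift, ℤ) where
  toFun ω := if CutEven ω.1 then 1 else 0
  continuous_toFun := by
    refine Continuous.if ?_ (by fun_prop) (by fun_prop)
    intro a ha
    rw [isClopen_cutEven.frontier_eq] at ha
    exact ha.elim

theorem indEven_pos {ω : ↥tmSubshift} (h : CutEven ω.1) : indEven ω = 1 := if_pos h

theorem indEven_neg {ω : ↥tmSubshift} (h : ¬ CutEven ω.1) : indEven ω = 0 := if_neg h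

/-- The renormalized functional, dual to desubstitution. -/
noncomputable def renorm (φ : C(↥tmSubshift, ℤ) →+ ℝ) : C(↥tmSubshift, ℤ) →+ ℝ where
  toFun g := φ (g.comp tmDesub)
  map_zero' := by rw [ContinuousMap.zero_comp, map_zero]
  map_add' f g := by rw [ContinuousMap.add_comp, map_add]

theorem renorm_apply (φ : C(↥tmSubshift, ℤ) →+ ℝ) (g : C(↥tmSubshift, ℤ)) :
    renorm φ g = φ (g.comp tmDesub) := rfl

/-- The two parity classes carry equal parts of a function that factors through desubstitution:
the shift exchanges the classes, and `tmDesub` is unchanged by the shift from even to odd. -/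
theorem InvState.half {φ : C(↥tmSubshift, ℤ) →+ ℝ} (hφ : InvState φ) (h : C(↥tmSubshift, ℤ)) :
    φ (indEven * h.comp tmDesub) = renorm φ h / 2 ∧
      φ ((1 - indEven) * h.comp tmDesub) = renorm φ h / 2 := by
  have e1 : ((1 - indEven) * h.comp tmDesub).comp tmShift = indEven * h.comp tmDesub := by
    ext ω
    by_cases hω : CutEven ω.1
    · simp [indEven_pos hω, indEven_neg (mt (cutEven_shift ω).1 (not_not.2 hω)),
        tmDesub_shift_even hω]
    · simp [indEven_neg hω, indEven_pos ((cutEven_shift ω).2 hω)]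
  have e2 := hφ.shift ((1 - indEven) * h.comp tmDesub)
  rw [e1] at e2
  have e3 : renorm φ h = φ (indEven * h.comp tmDesub) + φ ((1 - indEven) * h.comp tmDesub) := by
    rw [← map_add, renorm_apply]; congr 1; ring
  constructor <;> linarith

theorem InvState.renorm {φ : C(↥tmSubshift, ℤ) →+ ℝ} (hφ : InvState φ) : InvState (renorm φ) where
  one := by rw [renorm_apply, ContinuousMap.one_comp, hφ.one]
  nonneg g hg := hφ.nonneg _ fun ω => hg _
  shift g := by
    have e1 : (indEven * g.comp tmDesub).comp tmShift
        = (1 - indEven) * (g.comp tmShift).comp tmDesub := by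
      ext ω
      by_cases hω : CutEven ω.1
      · simp [indEven_pos hω, indEven_neg (mt (cutEven_shift ω).1 (not_not.2 hω))]
      · simp [indEven_neg hω, indEven_pos ((cutEven_shift ω).2 hω), tmDesub_shift_odd hω]
    have e2 := hφ.shift (indEven * g.comp tmDesub)
    rw [e1, (hφ.half _).1, (hφ.half _).2] at e2
    linarith

/-- The sum of `g` over the two levels of the tower above the image of the substitution. -/
def tower (g : C(↥tmSubshift, ℤ)) : C(↥tmSubshift, ℤ) :=
  g.comp tmSubst + g.comp (tmShift.comp tmSubst)

theorem InvState.tower {φ : C(↥tmSubshift, ℤ) →+ ℝ} (hφ : InvState φ) (g : C(↥tmSubshift, ℤ)) :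
    φ g = _root_.renorm φ (tower g) / 2 := by
  have e : g = indEven * (g.comp tmSubst).comp tmDesub
      + (1 - indEven) * (g.comp (tmShift.comp tmSubst)).comp tmDesub := by
    ext ω
    by_cases hω : CutEven ω.1
    · simp [indEven_pos hω, subst_desub_even hω]
    · simp [indEven_neg hω, subst_desub_odd hω]
  conv_lhs => rw [e]
  rw [map_add, (hφ.half _).1, (hφ.half _).2, _root_.tower, map_add]
  ring

/-! ### Frequencies of the two-letter words -/

/-- The function of `ω` given by `f` applied to the letters at positions `0` and `1`. -/
def pairFun (f : Fin 2 → Fin 2 → ℤ) : C(↥tmSubshift, ℤ) where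
  toFun ω := f (ω.1 0) (ω.1 1)
  continuous_toFun :=
    (continuous_of_discreteTopology (f := fun q : Fin 2 × Fin 2 => f q.1 q.2)).comp
      (continuous_coord_pair 0 1)

/-- The indicator function of the cylinder set of the word `ab` at position `0`. -/
def cyl (a b : Fin 2) : C(↥tmSubshift, ℤ) := pairFun fun x y => if x = a ∧ y = b then 1 else 0

theorem cyl_apply (a b : Fin 2) (ω : ↥tmSubshift) :
    cyl a b ω = if ω.1 0 = a ∧ ω.1 1 = b then 1 else 0 := rfl

theorem tower_apply (g : C(↥tmSubshift, ℤ)) (ω : ↥tmSubshift) :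
    tower g ω = g (tmSubst ω) + g (tmShift (tmSubst ω)) := rfl

theorem substZ_zero (ω : ℤ → Fin 2) : substZ ω 0 = ω 0 := rfl

theorem substZ_one (ω : ℤ → Fin 2) : substZ ω 1 = 1 + ω 0 := rfl

theorem substZ_two (ω : ℤ → Fin 2) : substZ ω 2 = ω 1 := rfl

theorem tower_letter : tower (cyl 0 0 + cyl 0 1) = 1 := by
  ext ω
  simp only [tower_apply, ContinuousMap.add_apply, cyl_apply, tmShift_val, tmSubst_val,
    ContinuousMap.one_apply]
  norm_num only [substZ_zero, substZ_one, substZ_two]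
  obtain h | h := fin2_cases (ω.1 0) <;> obtain h' | h' := fin2_cases (ω.1 1) <;> simp [h, h']

theorem tower_cyl : tower (cyl 0 0) = cyl 1 0 := by
  ext ω
  simp only [tower_apply, cyl_apply, tmShift_val, tmSubst_val]
  norm_num only [substZ_zero, substZ_one, substZ_two]
  obtain h | h := fin2_cases (ω.1 0) <;> obtain h' | h' := fin2_cases (ω.1 1) <;> simp [h, h']

theorem InvState.relations {φ : C(↥tmSubshift, ℤ) →+ ℝ} (hφ : InvState φ) :
    φ (cyl 0 1) = 1 / 2 - φ (cyl 0 0) ∧ φ (cyl 1 0) = 1 / 2 - φ (cyl 0 0) ∧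
      φ (cyl 1 1) = φ (cyl 0 0) := by
  have h1 : φ (cyl 0 0) + φ (cyl 0 1) = 1 / 2 := by
    rw [← map_add, hφ.tower, tower_letter, hφ.renorm.one]
  have h2 : φ (cyl 0 0) + φ (cyl 1 0) = 1 / 2 := by
    rw [← h1, ← map_add, ← map_add, ← hφ.shift (cyl 0 0 + cyl 0 1)]
    -- the letter `0` at position `1`, as the shift of the letter `0` at position `0`
    have e : (cyl 0 0 + cyl 1 0 : C(↥tmSubshift, ℤ)) = (cyl 0 0 + cyl 0 1).comp tmShift := by
      ext ω
      simp only [ContinuousMap.comp_apply, ContinuousMap.add_apply, cyl_apply, tmShift_val]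
      norm_num only
      generalize ω.1 0 = x
      generalize ω.1 1 = y
      generalize ω.1 2 = z
      revert x y z; decide
    rw [e]
  have h3 : φ (cyl 0 0) + φ (cyl 0 1) + φ (cyl 1 0) + φ (cyl 1 1) = 1 := by
    rw [← map_add, ← map_add, ← map_add, ← hφ.one]
    congr 1
    ext ω
    simp only [ContinuousMap.add_apply, cyl_apply, ContinuousMap.one_apply]
    generalize ω.1 0 = x
    generalize ω.1 1 = y
    revert x y; decide
  refine ⟨by linarith, by linarith, by linarith⟩

theorem cyl_nonneg (a b : Fin 2) (ω : ↥tmSubshift) : 0 ≤ cyl a b ω := by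
  rw [cyl_apply]; split_ifs <;> norm_num

/-- Renormalization acts on the frequency `x` of `00` by `x = 1/4 - x'/2`, an affine contraction
with fixed point `1/6`. -/
theorem InvState.freq {φ : C(↥tmSubshift, ℤ) →+ ℝ} (hφ : InvState φ) : φ (cyl 0 0) = 1 / 6 := by
  have key : ∀ n : ℕ, ∀ φ : C(↥tmSubshift, ℤ) →+ ℝ, InvState φ →
      |φ (cyl 0 0) - 1 / 6| ≤ (1 / 2) ^ n := by
    intro n
    induction n with
    | zero =>
      intro φ hφ
      have h0 := hφ.nonneg _ (cyl_nonneg 0 0)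
      have h1 := hφ.nonneg _ (cyl_nonneg 0 1)
      rw [hφ.relations.1] at h1
      rw [abs_le]; constructor <;> norm_num <;> linarith
    | succ n ih =>
      intro φ hφ
      have h := abs_le.1 (ih _ hφ.renorm)
      have e := hφ.tower (cyl 0 0)
      rw [tower_cyl, hφ.renorm.relations.2.1] at e
      rw [abs_le, pow_succ]
      constructor <;> linarith [h.1, h.2]
  have hlim : Filter.Tendsto (fun n : ℕ => (1 / 2 : ℝ) ^ n) Filter.atTop (nhds 0) :=
    tendsto_pow_atTop_nhds_zero_of_lt_one (by norm_num) (by norm_num)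
  have := ge_of_tendsto' hlim fun n => key n φ hφ
  have := abs_nonpos_iff.1 this
  linarith

/-! ### Values of an invariant state -/

/-- `g ω` is determined by the letters of `ω` at the positions `0, …, m`. -/
def Window (m : ℕ) (g : C(↥tmSubshift, ℤ)) : Prop :=
  ∀ ω ω' : ↥tmSubshift, (∀ i : ℕ, i ≤ m → ω.1 i = ω'.1 i) → g ω = g ω'

theorem Window.mono {m n : ℕ} {g : C(↥tmSubshift, ℤ)} (h : Window m g) (hmn : m ≤ n) :
    Window n g := fun ω ω' hω => h ω ω' fun i hi => hω i (hi.trans hmn)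

theorem Window.tower {m : ℕ} {g : C(↥tmSubshift, ℤ)} (h : Window m g) :
    Window ((m + 1) / 2) (tower g) := by
  intro ω ω' hω
  have key : ∀ j : ℕ, j ≤ m + 1 → substZ ω.1 j = substZ ω'.1 j := by
    intro j hj
    have := hω (j / 2) (by omega)
    push_cast at this
    unfold substZ
    rw [this]
  rw [tower_apply, tower_apply]
  congr 1
  · exact h _ _ fun i hi => key i (by omega)
  · refine h _ _ fun i hi => ?_
    have := key (i + 1) (by omega)
    push_cast at this
    exact this

theorem InvState.value_of_window_one {φ : C(↥tmSubshift, ℤ) →+ ℝ} (hφ : InvState φ)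
    {g : C(↥tmSubshift, ℤ)} (hg : Window 1 g) : ∃ k : ℤ, φ g = k / 6 := by
  have hfac : ∃ f : Fin 2 → Fin 2 → ℤ, ∀ ω : ↥tmSubshift, g ω = f (ω.1 0) (ω.1 1) := by
    have : Function.FactorsThrough (g : ↥tmSubshift → ℤ)
        (fun ω : ↥tmSubshift => (ω.1 0, ω.1 1)) := by
      intro ω ω' h
      simp only [Prod.mk.injEq] at h
      refine hg ω ω' fun i hi => ?_
      interval_cases i
      · exact h.1
      · exact h.2
    obtain ⟨f, hf⟩ := (Function.factorsThrough_iff _).1 this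
    exact ⟨fun a b => f (a, b), fun ω => congrFun hf ω⟩
  obtain ⟨f, hf⟩ := hfac
  have e : g = f 0 0 • cyl 0 0 + f 0 1 • cyl 0 1 + f 1 0 • cyl 1 0 + f 1 1 • cyl 1 1 := by
    ext ω
    rw [hf ω]
    simp only [ContinuousMap.add_apply, ContinuousMap.smul_apply, cyl_apply, smul_eq_mul]
    generalize ω.1 0 = x
    generalize ω.1 1 = y
    fin_cases x <;> fin_cases y <;> simp
  refine ⟨f 0 0 + 2 * f 0 1 + 2 * f 1 0 + f 1 1, ?_⟩
  rw [e]
  simp only [map_add, map_zsmul]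
  rw [hφ.relations.1, hφ.relations.2.1, hφ.relations.2.2, hφ.freq]
  simp only [zsmul_eq_mul]
  push_cast
  ring

theorem InvState.value_of_window (m : ℕ) : ∀ {φ : C(↥tmSubshift, ℤ) →+ ℝ}, InvState φ →
    ∀ {g : C(↥tmSubshift, ℤ)}, Window m g → ∃ (k : ℤ) (n : ℕ), φ g = k / (3 * 2 ^ n) := by
  induction m using Nat.strong_induction_on with
  | _ m ih =>
    intro φ hφ g hg
    rcases Nat.lt_or_ge m 2 with hm | hm
    · obtain ⟨k, hk⟩ := hφ.value_of_window_one (hg.mono (by omega : m ≤ 1))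
      exact ⟨k, 1, by rw [hk]; norm_num⟩
    · obtain ⟨k, n, hk⟩ := ih ((m + 1) / 2) (by omega) hφ.renorm hg.tower
      refine ⟨k, n + 1, ?_⟩
      rw [hφ.tower, hk, pow_succ]
      field_simp

theorem isClosed_tmSubshift : IsClosed tmSubshift := by
  unfold tmSubshift
  simp only [Set.ofPred_forall]
  refine isClosed_iInter fun a => isClosed_iInter fun k => ?_
  have hc : Continuous fun (ω : ℤ → Fin 2) (i : Fin k) => ω (a + (i : ℕ)) := by fun_prop
  exact (isClosed_discrete {f : Fin k → Fin 2 | ∃ n, List.ofFn f <:+: tmWord n}).preimage hc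

instance : CompactSpace ↥tmSubshift := isCompact_iff_compactSpace.1 isClosed_tmSubshift.isCompact

theorem exists_two_sided_window (g : C(↥tmSubshift, ℤ)) :
    ∃ N : ℕ, ∀ ω ω' : ↥tmSubshift, (∀ i : ℤ, |i| ≤ N → ω.1 i = ω'.1 i) → g ω = g ω' := by
  by_contra! hcon
  -- pairs agreeing on `[-N, N]` with different values of `g`: nested nonempty compact sets
  let K : ℕ → Set (↥tmSubshift × ↥tmSubshift) := fun N =>
    {q | (∀ i : ℤ, |i| ≤ N → q.1.1 i = q.2.1 i) ∧ g q.1 ≠ g q.2}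
  have hK : ∀ N, IsClosed (K N) := by
    intro N
    refine IsClosed.and ?_ ?_
    · simp only [Set.ofPred_forall]
      exact isClosed_iInter fun i => isClosed_iInter fun _ =>
        isClosed_eq ((continuous_coord i).comp continuous_fst)
          ((continuous_coord i).comp continuous_snd)
    · have hc : Continuous fun q : ↥tmSubshift × ↥tmSubshift => (g q.1, g q.2) := by fun_prop
      exact (isClosed_discrete {q : ℤ × ℤ | q.1 ≠ q.2}).preimage hc
  obtain ⟨q, hq⟩ := IsCompact.nonempty_iInter_of_sequence_nonempty_isCompact_isClosed K
    (fun N q hq => ⟨fun i hi => hq.1 i (hi.trans (by push_cast; omega)), hq.2⟩)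
    (fun N => by
      obtain ⟨ω, ω', h, hne⟩ := hcon N
      exact ⟨(ω, ω'), h, hne⟩)
    (hK 0).isCompact hK
  rw [Set.mem_iInter] at hq
  refine (hq 0).2 (congrArg g (Subtype.ext (funext fun i => ?_)))
  exact (hq i.natAbs).1 i (by rw [Int.natCast_natAbs])

theorem InvState.value {φ : C(↥tmSubshift, ℤ) →+ ℝ} (hφ : InvState φ) (g : C(↥tmSubshift, ℤ)) :
    ∃ (k : ℤ) (n : ℕ), φ g = k / (3 * 2 ^ n) := by
  obtain ⟨N, hN⟩ := exists_two_sided_window g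
  have key : ∀ M : ℕ, ∃ g' : C(↥tmSubshift, ℤ), φ g' = φ g ∧
      ∀ ω ω' : ↥tmSubshift, (∀ i : ℤ, |i - M| ≤ N → ω.1 i = ω'.1 i) → g' ω = g' ω' := by
    intro M
    induction M with
    | zero => exact ⟨g, rfl, by simpa using hN⟩
    | succ M ih =>
      obtain ⟨g', h1, h2⟩ := ih
      refine ⟨g'.comp tmShift, by rw [hφ.shift, h1], fun ω ω' h => h2 _ _ fun i hi => ?_⟩
      refine h (i + 1) ?_
      push_cast
      rwa [add_sub_add_right_eq_sub]
  obtain ⟨g', h1, h2⟩ := key N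
  rw [← h1]
  refine InvState.value_of_window (2 * N) hφ fun ω ω' h => h2 ω ω' fun i hi => ?_
  rw [abs_le] at hi
  have := h i.toNat (by omega)
  rwa [Int.toNat_of_nonneg (by omega)] at this

theorem InvState.exists_unit (n : ℕ) : ∀ {φ : C(↥tmSubshift, ℤ) →+ ℝ}, InvState φ →
    ∃ g, φ g = 1 / (3 * 2 ^ n) := by
  induction n with
  | zero => exact fun {φ} hφ => ⟨cyl 0 1, by rw [hφ.relations.1, hφ.freq]; norm_num⟩
  | succ n ih =>
    intro φ hφ
    obtain ⟨g, hg⟩ := ih hφ.renorm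
    refine ⟨indEven * g.comp tmDesub, ?_⟩
    rw [(hφ.half g).1, hg, pow_succ]
    field_simp

/-! ### Integration as an invariant state -/

theorem integrable_intCast (μ : Measure ↥tmSubshift) [IsProbabilityMeasure μ]
    (g : C(↥tmSubshift, ℤ)) : Integrable (fun ω => ((g ω : ℤ) : ℝ)) μ := by
  have hc : Continuous fun ω => ((g ω : ℤ) : ℝ) := by fun_prop
  exact hc.integrable_of_hasCompactSupport (HasCompactSupport.of_compactSpace _)

/-- Integration of integer-valued continuous functions, as an additive functional. -/
noncomputable def intState (μ : Measure ↥tmSubshift) [IsProbabilityMeasure μ] :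
    C(↥tmSubshift, ℤ) →+ ℝ where
  toFun g := ∫ ω, ((g ω : ℤ) : ℝ) ∂μ
  map_zero' := by simp
  map_add' f g := by
    simp only [ContinuousMap.add_apply, Int.cast_add]
    exact integral_add (integrable_intCast μ f) (integrable_intCast μ g)

theorem intState_inv (μ : Measure ↥tmSubshift) [IsProbabilityMeasure μ]
    (h : MeasurePreserving tmShift μ μ) : InvState (intState μ) where
  one := by simp [intState]
  nonneg g hg := integral_nonneg fun ω => Int.cast_nonneg (hg ω)
  shift g := by
    have := integral_map (μ := μ) h.measurable.aemeasurable
      (f := fun ω => ((g ω : ℤ) : ℝ)) (by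
        rw [h.map_eq]; exact (integrable_intCast μ g).aestronglyMeasurable)
    rw [h.map_eq] at this
    exact this.symm

/-- Gap labels of the Thue–Morse subshift: for every `T`-ergodic probability measure `μ`
on the Thue–Morse subshift, the set of integrals of continuous integer-valued functions
equals `{k/(3·2^n) : k ∈ ℤ, n ∈ ℕ ∪ {0}}`. -/
theorem stmt18
    (TΩ : ↥tmSubshift → ↥tmSubshift)
    (hTΩ : ∀ ω : ↥tmSubshift, ((TΩ ω : ℤ → Fin 2)) = fun n => (ω : ℤ → Fin 2) (n + 1))
    (μ : Measure ↥tmSubshift) [IsProbabilityMeasure μ] (herg : Ergodic TΩ μ) :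
    {x : ℝ | ∃ g : C(↥tmSubshift, ℤ), ∫ ω, ((g ω : ℤ) : ℝ) ∂μ = x}
      = {x : ℝ | ∃ (k : ℤ) (n : ℕ), x = (k : ℝ) / (3 * 2 ^ n)} := by
  have hT : TΩ = tmShift := funext fun ω => Subtype.ext (hTΩ ω)
  subst hT
  have hφ := intState_inv μ herg.toMeasurePreserving
  ext x
  constructor
  · rintro ⟨g, rfl⟩
    exact hφ.value g
  · rintro ⟨k, n, rfl⟩
    obtain ⟨g, hg⟩ := InvState.exists_unit n hφ
    refine ⟨k • g, ?_⟩
    change intState μ (k • g) = _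
    rw [map_zsmul, hg, zsmul_eq_mul]
    ring
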